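/- Approximate Ramsey property for Banach spaces with a distinguished contractive functional: for all finite-dimensional complex normed spaces X and Y equipped with linear functionals s_X : X → ℂ and s_Y : Y → ℂ of norm at most 1, every r ∈ ℕ, and every ε > 0, there exist a finite-dimensional complex normed space Z and a linear functional s_Z : Z → ℂ of norm at most 1 such that for every coloring c of the set of linear isometric embeddings φ : X → Z satisfying s_Z ∘ φ = s_X with r colors, there exist a linear isometric embedding γ : Y → Z with s_Z ∘ γ = s_Y and a color j such that for every linear isometric embedding η : X → Y with s_Y ∘ η = s_X there is a linear isometric embedding ξ : X → Z with s_Z ∘ ξ = s_X, c(ξ) = j, and ‖γ ∘ η − ξ‖ ≤ ε (operator norm). -/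

import Mathlib

universe u

universe v w a

/-!
By compactness it suffices to treat a finite family `A` of embeddings of `X` into `Y`. Take a finite
vertex-Ramsey hypergraph with edges indexed by `A`, put a copy of `X` on every vertex and a copy of
`Y` on every edge, and amalgamate approximately: `Z` is the space whose dual unit ball consists of
the families of contractive functionals on these copies that are compatible up to `1 / n`. A
colouring of the embeddings of `X` colours the vertices, and a monochromatic edge is the required
copy of `Y`.

The copies embed isometrically if every contractive functional on one of them extends to such a
family. By Hahn-Banach it extends across one edge, and an error of `1 / n` per edge allows its norm
to decrease by `1 / n`, so that it vanishes `n` edges away: no cycle is ever closed up if the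
hypergraph looks like one of large girth. Such hypergraphs come from Hales-Jewett for `n = 1`, as
two combinatorial lines share at most one point, and the partite construction passes from `n` to
`2 * n`.
-/

section Hypergraph

variable {A V W I κ Φ : Type*} [Zero Φ] {n : ℕ}

/-- A hypergraph is encoded as a set `E : Set (A → V)` of `A`-indexed edges; this says that some
edge is monochromatic for the vertex colouring `c`. -/
def HasMonoEdge (E : Set (A → V)) (c : V → κ) : Prop :=
  ∃ e ∈ E, ∃ j, ∀ a, c (e a) = j

/-- The vertex-Ramsey property with colours in `κ`, i.e. chromatic number greater than `|κ|`. -/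
def VertexRamsey (κ : Type*) (E : Set (A → V)) : Prop :=
  ∀ c : V → κ, HasMonoEdge E c

/-- The vertex-Ramsey property for those colourings that are constant on each part `p ⁻¹' {k}` with
`k ≥ i`: the property that the partite construction improves from `i` to `i + 1`. -/
def VertexRamseyFrom (κ : Type*) (E : Set (A → V)) (p : V → ℕ) (i : ℕ) : Prop :=
  ∀ c : V → κ, (∀ v w, p v = p w → i ≤ p v → c v = c w) → HasMonoEdge E c

theorem VertexRamseyFrom.vertexRamsey {E : Set (A → V)} {p : V → ℕ} {N : ℕ}
    (hE : VertexRamseyFrom κ E p N) (hp : ∀ v, p v < N) : VertexRamsey κ E :=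
  fun c => hE c fun v _ _ hv => absurd hv (hp v).not_ge

/-- A local labelling problem: vertices of a hypergraph are to be labelled by elements of `Φ` so
that every edge reads an admissible tuple. A label of level `j` at one vertex of an edge can be
completed to an admissible tuple whose other entries have level `j + 1`, so perturbations die out
after `n` steps. -/
structure DecaySystem (A Φ : Type*) [Zero Φ] (n : ℕ) where
  level : ℕ → Set Φ
  admissible : Set (A → Φ)
  antitone_level : Antitone level
  zero_mem_level : ∀ j, 0 ∈ level j
  level_subset_zero : level n ⊆ {0}
  zero_mem_admissible : 0 ∈ admissible
  exists_admissible : ∀ j a, ∀ x ∈ level j,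
    ∃ τ ∈ admissible, τ a = x ∧ ∀ b ≠ a, τ b ∈ level (j + 1)

/-- The system obtained by discarding the first `d` levels. -/
def DecaySystem.shift (S : DecaySystem A Φ n) (d : ℕ) : DecaySystem A Φ n where
  level j := S.level (d + j)
  admissible := S.admissible
  antitone_level _ _ hjk := S.antitone_level (by gcongr)
  zero_mem_level _ := S.zero_mem_level _
  level_subset_zero := (S.antitone_level (Nat.le_add_left n d)).trans S.level_subset_zero
  zero_mem_admissible := S.zero_mem_admissible
  exists_admissible j := S.exists_admissible (d + j)

/-- Every labelling of one edge extends to the hypergraph, losing one level away from that edge.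
This is the only consequence of large girth that is needed. -/
def EdgeExtendable (Φ : Type*) [Zero Φ] (n : ℕ) (E : Set (A → V)) : Prop :=
  ∀ S : DecaySystem A Φ n, ∀ e₀ ∈ E, ∀ τ : A → Φ, (∀ a, τ a ∈ S.level 0) →
    ∃ l : V → Φ, l ∘ e₀ = τ ∧ (∀ e ∈ E, e ≠ e₀ → l ∘ e ∈ S.admissible) ∧
      ∀ v ∉ Set.range e₀, l v ∈ S.level 1

/-- Every label of one vertex extends to the hypergraph, losing one level at the other vertices and
two levels at the other vertices of its own part; here `p v` is the part of the vertex `v`. -/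
def VertexExtendable (Φ : Type*) [Zero Φ] (n : ℕ) (E : Set (A → V)) (p : V → I) : Prop :=
  ∀ S : DecaySystem A Φ n, ∀ v, ∀ x ∈ S.level 0,
    ∃ l : V → Φ, (∀ e ∈ E, l ∘ e ∈ S.admissible) ∧ l v = x ∧ (∀ w ≠ v, l w ∈ S.level 1) ∧
      ∀ w ≠ v, p w = p v → l w ∈ S.level 2

theorem EdgeExtendable.exists_labelling_of_vertex {E : Set (A → V)} (hE : EdgeExtendable Φ n E)
    (S : DecaySystem A Φ n) (v : V) {x : Φ} (hx : x ∈ S.level 0) :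
    ∃ l : V → Φ, (∀ e ∈ E, l ∘ e ∈ S.admissible) ∧ l v = x ∧ ∀ w ≠ v, l w ∈ S.level 1 := by
  classical
  by_cases hv : ∃ e₀ ∈ E, ∃ a, e₀ a = v
  · obtain ⟨e₀, he₀, a, rfl⟩ := hv
    obtain ⟨τ, hτ, hτa, hτb⟩ := S.exists_admissible 0 a x hx
    have hτ₀ (b : A) : τ b ∈ S.level 0 := by
      by_cases hb : b = a
      · rwa [hb, hτa]
      · exact S.antitone_level zero_le_one (hτb b hb)
    obtain ⟨l, hle₀, hle, hl⟩ := hE S e₀ he₀ τ hτ₀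
    refine ⟨l, fun e he => ?_, (congrFun hle₀ a).trans hτa, fun w hw => ?_⟩
    · by_cases hee₀ : e = e₀
      · rwa [hee₀, hle₀]
      · exact hle e he hee₀
    · by_cases hwe₀ : w ∈ Set.range e₀
      · obtain ⟨b, rfl⟩ := hwe₀
        have hlb : l (e₀ b) = τ b := congrFun hle₀ b
        exact hlb ▸ hτb b (ne_of_apply_ne e₀ hw)
      · exact hl w hwe₀
  · refine ⟨Pi.single v x, fun e he => ?_, Pi.single_eq_same (M := fun _ => Φ) v x, fun w hw => ?_⟩
    · have hzero : Pi.single v x ∘ e = (0 : A → Φ) :=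
        funext fun a => Pi.single_eq_of_ne (M := fun _ => Φ) (fun hav => hv ⟨e, he, a, hav⟩) x
      exact hzero ▸ S.zero_mem_admissible
    · rw [Pi.single_eq_of_ne hw]
      exact S.zero_mem_level 1

theorem edgeExtendable_one_of_linear {E : Set (A → V)}
    (hinj : ∀ e ∈ E, Function.Injective e)
    (hlin : ∀ e ∈ E, ∀ e' ∈ E, ∀ a b a' b', a ≠ b → e a = e' a' → e b = e' b' → e = e') :
    EdgeExtendable Φ 1 E := by
  intro S e₀ he₀ τ hτ
  have hoff (v : V) (hv : v ∉ Set.range e₀) : Function.extend e₀ τ 0 v = 0 :=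
    Function.extend_apply' _ _ v hv
  refine ⟨Function.extend e₀ τ 0, Function.extend_comp (hinj e₀ he₀) τ 0, fun e he hne => ?_,
    fun v hv => hoff v hv ▸ S.zero_mem_level 1⟩
  by_cases hmeet : ∃ a b, e₀ a = e b
  · obtain ⟨a, b, hab⟩ := hmeet
    obtain ⟨σ, hσ, hσb, hσ'⟩ := S.exists_admissible 0 b (τ a) (hτ a)
    have hext : Function.extend e₀ τ 0 ∘ e = σ := by
      funext b'
      by_cases hb' : b' = b
      · rw [hb', hσb, Function.comp_apply, ← hab, (hinj e₀ he₀).extend_apply]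
      · rw [S.level_subset_zero (hσ' b' hb')]
        exact hoff _ fun ⟨a', ha'⟩ => hne (hlin e he e₀ he₀ b' b a' a hb' ha'.symm hab.symm)
    exact hext ▸ hσ
  · have hzero : Function.extend e₀ τ 0 ∘ e = 0 :=
      funext fun b => hoff _ fun ⟨a, hab⟩ => hmeet ⟨a, b, hab⟩
    exact hzero ▸ S.zero_mem_admissible

theorem combinatorialLine_injective {ι : Type*} (l : Combinatorics.Line A ι) :
    Function.Injective l := by
  intro a b hab
  obtain ⟨i, hi⟩ := l.proper
  simpa only [l.apply_none _ i hi] using congrFun hab i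

theorem combinatorialLine_eq_of_two_points {ι : Type*} {l l' : Combinatorics.Line A ι}
    {a b a' b' : A} (hab : a ≠ b) (ha : l a = l' a') (hb : l b = l' b') : l = l' := by
  have ha_i (i : ι) : (l.idxFun i).getD a = (l'.idxFun i).getD a' := congrFun ha i
  have hb_i (i : ι) : (l.idxFun i).getD b = (l'.idxFun i).getD b' := congrFun hb i
  obtain ⟨i, hi⟩ := l.proper
  have hi' : l'.idxFun i = none := by
    cases hc : l'.idxFun i with
    | none => rfl
    | some c => exact absurd ((by simpa [hi, hc] using ha_i i : a = c).trans
        (by simpa [hi, hc] using hb_i i : b = c).symm) hab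
  have haa' : a = a' := by simpa [hi, hi'] using ha_i i
  have hbb' : b = b' := by simpa [hi, hi'] using hb_i i
  ext1
  funext j
  specialize ha_i j
  specialize hb_i j
  cases h : l.idxFun j <;> cases h' : l'.idxFun j <;> simp_all

theorem edgeExtendable_one_combinatorialLines (Φ A ι : Type*) [Zero Φ] :
    EdgeExtendable Φ 1 (Set.range fun l : Combinatorics.Line A ι => (l : A → ι → A)) := by
  apply edgeExtendable_one_of_linear
  · rintro _ ⟨l, rfl⟩
    exact combinatorialLine_injective l
  · rintro _ ⟨l, rfl⟩ _ ⟨l', rfl⟩ a b a' b' hab ha hb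
    exact congrArg _ (combinatorialLine_eq_of_two_points hab ha hb)

theorem edgeExtendable_range_mk (Φ ι A : Type*) [Zero Φ] (n : ℕ) :
    EdgeExtendable Φ n (Set.range (Prod.mk : ι → A → ι × A)) := by
  classical
  rintro S _ ⟨i, rfl⟩ τ -
  refine ⟨fun w => if w.1 = i then τ w.2 else 0, funext fun a => if_pos rfl, ?_, fun w hw => ?_⟩
  · rintro _ ⟨i', rfl⟩ hne
    have hzero : (fun w : ι × A => if w.1 = i then τ w.2 else 0) ∘ Prod.mk i' = 0 :=
      funext fun a => if_neg (ne_of_apply_ne Prod.mk hne)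
    exact hzero ▸ S.zero_mem_admissible
  · have hwi : w.1 ≠ i := fun h => hw ⟨w.2, Prod.ext h.symm rfl⟩
    simpa only [if_neg hwi] using S.zero_mem_level 1

theorem vertexExtendable_range_mk (Φ : Type*) [Zero Φ] (n : ℕ) {ι : Type*} {p : ι × A → I}
    (hp : ∀ i, Function.Injective fun a => p (i, a)) :
    VertexExtendable Φ n (Set.range (Prod.mk : ι → A → ι × A)) p := by
  classical
  rintro S ⟨i, a⟩ x hx
  obtain ⟨τ, hτ, hτa, hτb⟩ := S.exists_admissible 0 a x hx
  refine ⟨fun w => if w.1 = i then τ w.2 else 0, ?_, by simpa using hτa, ?_, ?_⟩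
  · rintro _ ⟨i', rfl⟩
    by_cases hi : i' = i
    · simpa [Function.comp_def, hi] using hτ
    · have hzero : (fun w : ι × A => if w.1 = i then τ w.2 else 0) ∘ Prod.mk i' = 0 :=
        funext fun _ => if_neg hi
      exact hzero ▸ S.zero_mem_admissible
  · rintro ⟨i', b⟩ hw
    by_cases hi : i' = i
    · subst hi
      simpa using hτb b (ne_of_apply_ne (Prod.mk i') hw)
    · simpa only [if_neg hi] using S.zero_mem_level 1
  · rintro ⟨i', b⟩ hw hpart
    have hi : i' ≠ i := by
      rintro rfl
      exact hw (congrArg _ (hp i' hpart))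
    simpa only [if_neg hi] using S.zero_mem_level 2

theorem vertexRamseyFrom_embeddings (κ A : Type*) [Fintype κ] [Nonempty κ] [Fintype A] :
    VertexRamseyFrom κ
      (Set.range (Prod.mk : (A ↪ Fin (Fintype.card κ * Fintype.card A)) → A → _))
      (fun v => (v.1 v.2 : ℕ)) 0 := by
  classical
  intro c hc
  let part (v : (A ↪ Fin (Fintype.card κ * Fintype.card A)) × A) := v.1 v.2
  have hfactors : Function.FactorsThrough c part :=
    fun v w hvw => hc v w (congrArg Fin.val hvw) (Nat.zero_le _)
  let partColour := Function.extend part c fun _ => Classical.arbitrary κ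
  obtain ⟨j, hj⟩ := Fintype.exists_le_card_fiber_of_mul_le_card partColour
    (n := Fintype.card A) (Fintype.card_fin _).ge
  obtain ⟨f⟩ : Nonempty (A ↪ {k // partColour k = j}) :=
    Function.Embedding.nonempty_of_card_le (by rwa [Fintype.card_subtype])
  let e := f.trans (Function.Embedding.subtype _)
  exact ⟨Prod.mk e, ⟨e, rfl⟩, j, fun a => (hfactors.extend_apply _ (e, a)).symm.trans (f a).2⟩

section Amalgam

variable {p : V → I} {i : I} {H : Set ({v // p v = i} → W)}

open Classical in
/-- The amalgam of copies of a hypergraph on `V`, one for each edge of the hypergraph `H`, whose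
`i`-th parts are glued along the edges of `H`, has vertex set `W ⊕ H × {v // p v ≠ i}`. This is the
embedding of the copy belonging to the edge `h`. -/
noncomputable def amalgamCopy (h : H) (v : V) : W ⊕ H × {v // p v ≠ i} :=
  if hv : p v = i then .inl (h.1 ⟨v, hv⟩) else .inr (h, ⟨v, hv⟩)

/-- The edges of the amalgam over `H` of copies of the hypergraph `E`. -/
def amalgamEdges (E : Set (A → V)) (H : Set ({v // p v = i} → W)) :
    Set (A → W ⊕ H × {v // p v ≠ i}) :=
  {f | ∃ h : H, ∃ e ∈ E, amalgamCopy h ∘ e = f}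

/-- The partition of the vertices of the amalgam, which extends the one of each copy. -/
def amalgamPart : W ⊕ H × {v // p v ≠ i} → I :=
  Sum.elim (fun _ => i) fun w => p w.2

theorem amalgamCopy_of_mem (h : H) {v : V} (hv : p v = i) :
    amalgamCopy h v = .inl (h.1 ⟨v, hv⟩) :=
  dif_pos hv

theorem amalgamCopy_of_notMem (h : H) {v : V} (hv : p v ≠ i) :
    amalgamCopy h v = .inr (h, ⟨v, hv⟩) :=
  dif_neg hv

theorem amalgamPart_amalgamCopy (h : H) (v : V) : amalgamPart (amalgamCopy h v) = p v := by
  by_cases hv : p v = i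
  · rw [amalgamCopy_of_mem h hv]
    exact hv.symm
  · rw [amalgamCopy_of_notMem h hv]
    rfl

theorem elim_comp_amalgamCopy {Ψ : Type*} {l : W → Ψ} {m : H → V → Ψ}
    (hlm : ∀ h (v : {v // p v = i}), m h v = l (h.1 v)) (h : H) :
    Sum.elim l (fun w => m w.1 w.2) ∘ amalgamCopy h = m h := by
  funext v
  by_cases hv : p v = i
  · rw [Function.comp_apply, amalgamCopy_of_mem h hv, Sum.elim_inl, hlm h ⟨v, hv⟩]
  · rw [Function.comp_apply, amalgamCopy_of_notMem h hv, Sum.elim_inr]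

variable {E : Set (A → V)}

/-- The labelling problem for the hypergraph `H` whose solutions lift to the amalgam: a tuple on the
`i`-th part is admissible if it extends to an admissible labelling of a whole copy. Since distinct
vertices of a part are two steps apart, the number of levels is halved. -/
def DecaySystem.onPart (S : DecaySystem A Φ (2 * n)) (hE : VertexExtendable Φ (2 * n) E p) (i : I) :
    DecaySystem {v // p v = i} Φ n where
  level j := S.level (2 * j)
  admissible := {τ | ∃ m : V → Φ, (∀ v : {v // p v = i}, m v = τ v) ∧
    (∀ e ∈ E, m ∘ e ∈ S.admissible) ∧ ∀ v, p v ≠ i → m v ∈ S.level 1}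
  antitone_level _ _ hjk := S.antitone_level (by gcongr)
  zero_mem_level _ := S.zero_mem_level _
  level_subset_zero := S.level_subset_zero
  zero_mem_admissible :=
    ⟨0, fun _ => rfl, fun _ _ => S.zero_mem_admissible, fun _ _ => S.zero_mem_level 1⟩
  exists_admissible := by
    rintro j ⟨v, hv⟩ x hx
    obtain ⟨m, hadm, hmv, hm₁, hm₂⟩ := hE (S.shift (2 * j)) v x hx
    refine ⟨fun w => m w, ⟨m, fun _ => rfl, hadm, fun w hw => ?_⟩, hmv, fun w hw => ?_⟩
    · exact S.antitone_level (Nat.le_add_left 1 _) (hm₁ w fun hwv => hw (hwv ▸ hv))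
    · exact hm₂ w (fun hwv => hw (Subtype.ext hwv)) (w.2.trans hv.symm)

theorem exists_labelling_of_amalgamCopy (hE : VertexExtendable Φ (2 * n) E p)
    (hH : EdgeExtendable Φ n H) (S : DecaySystem A Φ (2 * n)) (h₀ : H) {m₀ : V → Φ}
    (hm₀ : ∀ v, p v = i → m₀ v ∈ S.level 0) :
    ∃ l : W ⊕ H × {v // p v ≠ i} → Φ, l ∘ amalgamCopy h₀ = m₀ ∧
      (∀ h ≠ h₀, ∀ e ∈ E, l ∘ amalgamCopy h ∘ e ∈ S.admissible) ∧
      ∀ w ∉ Set.range (amalgamCopy h₀), l w ∈ S.level 1 := by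
  obtain ⟨l, hl₀, hladm, hl₁⟩ := hH (S.onPart hE i) h₀ h₀.2 (fun v => m₀ v) fun v => hm₀ v v.2
  have hcopy (h : H) : ∃ m : V → Φ, (∀ v : {v // p v = i}, m v = l (h.1 v)) ∧ (h = h₀ → m = m₀) ∧
      (h ≠ h₀ → (∀ e ∈ E, m ∘ e ∈ S.admissible) ∧ ∀ v, p v ≠ i → m v ∈ S.level 1) := by
    by_cases hh : h = h₀
    · exact ⟨m₀, fun v => hh ▸ (congrFun hl₀ v).symm, fun _ => rfl, fun hne => absurd hh hne⟩
    · obtain ⟨m, hml, hm⟩ := hladm h h.2 fun heq => hh (Subtype.ext heq)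
      exact ⟨m, hml, fun heq => absurd heq hh, fun _ => hm⟩
  choose m hml hmh₀ hm using hcopy
  refine ⟨_, (elim_comp_amalgamCopy hml h₀).trans (hmh₀ h₀ rfl), fun h hh e he => ?_, ?_⟩
  · rw [← Function.comp_assoc, elim_comp_amalgamCopy hml h]
    exact (hm h hh).1 e he
  · rintro (w | ⟨h, v, hv⟩) hw
    · refine S.antitone_level one_le_two (hl₁ w ?_)
      rintro ⟨⟨v, hv⟩, rfl⟩
      exact hw ⟨v, amalgamCopy_of_mem h₀ hv⟩
    · refine (hm h ?_).2 v hv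
      rintro rfl
      exact hw ⟨v, amalgamCopy_of_notMem h hv⟩

theorem EdgeExtendable.amalgam (hE : EdgeExtendable Φ (2 * n) E)
    (hEp : VertexExtendable Φ (2 * n) E p) (hH : EdgeExtendable Φ n H) :
    EdgeExtendable Φ (2 * n) (amalgamEdges E H) := by
  rintro S _ ⟨h₀, e₀, he₀, rfl⟩ τ hτ
  obtain ⟨m, hme₀, hmadm, hm₁⟩ := hE S e₀ he₀ τ hτ
  have hm₀ (v : V) : m v ∈ S.level 0 := by
    by_cases hv : v ∈ Set.range e₀
    · obtain ⟨a, rfl⟩ := hv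
      have hma : m (e₀ a) = τ a := congrFun hme₀ a
      exact hma ▸ hτ a
    · exact S.antitone_level zero_le_one (hm₁ v hv)
  obtain ⟨l, hlh₀, hladm, hl₁⟩ := exists_labelling_of_amalgamCopy hEp hH S h₀ fun v _ => hm₀ v
  refine ⟨l, ?_, ?_, fun w hw => ?_⟩
  · rw [← Function.comp_assoc, hlh₀, hme₀]
  · rintro _ ⟨h, e, he, rfl⟩ hne
    by_cases hh : h = h₀
    · subst hh
      rw [← Function.comp_assoc, hlh₀]
      exact hmadm e he (ne_of_apply_ne _ hne)
    · exact hladm h hh e he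
  · by_cases hwh₀ : w ∈ Set.range (amalgamCopy h₀)
    · obtain ⟨v, rfl⟩ := hwh₀
      have hlv : l (amalgamCopy h₀ v) = m v := congrFun hlh₀ v
      refine hlv ▸ hm₁ v ?_
      rintro ⟨a, rfl⟩
      exact hw ⟨a, rfl⟩
    · exact hl₁ w hwh₀

theorem VertexExtendable.exists_labelling_of_glued_vertex (hE : VertexExtendable Φ (2 * n) E p)
    (hH : EdgeExtendable Φ n H) (S : DecaySystem A Φ (2 * n)) (w₀ : W) {x : Φ}
    (hx : x ∈ S.level 0) :
    ∃ l : W ⊕ H × {v // p v ≠ i} → Φ, (∀ f ∈ amalgamEdges E H, l ∘ f ∈ S.admissible) ∧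
      l (.inl w₀) = x ∧ (∀ w ≠ w₀, l (.inl w) ∈ S.level 2) ∧ ∀ w, l (.inr w) ∈ S.level 1 := by
  obtain ⟨l, hladm, hlw₀, hl₂⟩ := hH.exists_labelling_of_vertex (S.onPart hE i) w₀ hx
  choose m hml hmadm hm₁ using fun h : H => hladm h h.2
  refine ⟨Sum.elim l fun w => m w.1 w.2, ?_, hlw₀, hl₂, fun w => hm₁ w.1 w.2 w.2.2⟩
  rintro _ ⟨h, e, he, rfl⟩
  rw [← Function.comp_assoc, elim_comp_amalgamCopy hml h]
  exact hmadm h e he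

theorem VertexExtendable.exists_labelling_of_copied_vertex
    (hE : VertexExtendable Φ (2 * n) E p) (hH : EdgeExtendable Φ n H)
    (S : DecaySystem A Φ (2 * n)) (h₀ : H) {v : V} (hv : p v ≠ i) {x : Φ} (hx : x ∈ S.level 0) :
    ∃ l : W ⊕ H × {v // p v ≠ i} → Φ, (∀ f ∈ amalgamEdges E H, l ∘ f ∈ S.admissible) ∧
      l (amalgamCopy h₀ v) = x ∧ (∀ v' ≠ v, l (amalgamCopy h₀ v') ∈ S.level 1) ∧
      (∀ v' ≠ v, p v' = p v → l (amalgamCopy h₀ v') ∈ S.level 2) ∧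
      ∀ w ∉ Set.range (amalgamCopy h₀), l w ∈ S.level 2 := by
  obtain ⟨m, hmadm, hmv, hm₁, hm₂⟩ := hE S v x hx
  -- The glued part avoids `v`, so it starts at level `1` and everything outside drops to level `2`.
  obtain ⟨l, hlh₀, hladm, hl₂⟩ := exists_labelling_of_amalgamCopy hE hH (S.shift 1) h₀
    fun v' hv' => hm₁ v' fun h => hv (h ▸ hv')
  have hlm (v' : V) : l (amalgamCopy h₀ v') = m v' := congrFun hlh₀ v'
  refine ⟨l, ?_, (hlm v).trans hmv, fun v' hne => hlm v' ▸ hm₁ v' hne,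
    fun v' hne hpart => hlm v' ▸ hm₂ v' hne hpart, hl₂⟩
  rintro _ ⟨h, e, he, rfl⟩
  by_cases hh : h = h₀
  · rw [hh, ← Function.comp_assoc, hlh₀]
    exact hmadm e he
  · exact hladm h hh e he

theorem VertexExtendable.amalgam (hE : VertexExtendable Φ (2 * n) E p)
    (hH : EdgeExtendable Φ n H) :
    VertexExtendable Φ (2 * n) (amalgamEdges E H) amalgamPart := by
  rintro S (w₀ | ⟨h₀, v, hv⟩) x hx
  · obtain ⟨l, hladm, hlw₀, hlW, hlV⟩ := hE.exists_labelling_of_glued_vertex hH S w₀ hx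
    refine ⟨l, hladm, hlw₀, ?_, ?_⟩
    · rintro (w | w) hne
      · exact S.antitone_level one_le_two (hlW w (ne_of_apply_ne _ hne))
      · exact hlV w
    · rintro (w | w) hne hpart
      · exact hlW w (ne_of_apply_ne _ hne)
      · exact absurd hpart w.2.2
  · rw [← amalgamCopy_of_notMem h₀ hv]
    obtain ⟨l, hladm, hlv, hl₁, hl₂, hloff⟩ :=
      hE.exists_labelling_of_copied_vertex hH S h₀ hv hx
    refine ⟨l, hladm, hlv, fun w hne => ?_, fun w hne hpart => ?_⟩ <;>
      by_cases hw : w ∈ Set.range (amalgamCopy h₀)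
    · obtain ⟨v', rfl⟩ := hw
      exact hl₁ v' (ne_of_apply_ne _ hne)
    · exact S.antitone_level one_le_two (hloff w hw)
    · obtain ⟨v', rfl⟩ := hw
      rw [amalgamPart_amalgamCopy, amalgamPart_amalgamCopy] at hpart
      exact hl₂ v' (ne_of_apply_ne _ hne) hpart
    · exact hloff w hw

end Amalgam

theorem VertexRamseyFrom.amalgam {E : Set (A → V)} {p : V → ℕ} {i : ℕ}
    {H : Set ({v // p v = i} → W)} (hE : VertexRamseyFrom κ E p i) (hH : VertexRamsey κ H) :
    VertexRamseyFrom κ (amalgamEdges E H) amalgamPart (i + 1) := by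
  intro c hc
  -- On a copy whose glued part is monochromatic, `c` is constant on the parts from `i` on.
  obtain ⟨h, hh, j₀, hj₀⟩ := hH fun w => c (.inl w)
  have hconst (v w : V) (hvw : p v = p w) (hiv : i ≤ p v) :
      c (amalgamCopy ⟨h, hh⟩ v) = c (amalgamCopy ⟨h, hh⟩ w) := by
    obtain hv | hv := hiv.eq_or_lt
    · rw [amalgamCopy_of_mem _ hv.symm, amalgamCopy_of_mem _ (hvw.symm.trans hv.symm)]
      exact (hj₀ _).trans (hj₀ _).symm
    · apply hc <;> simpa only [amalgamPart_amalgamCopy]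
  obtain ⟨e, he, j, hj⟩ := hE (fun v => c (amalgamCopy ⟨h, hh⟩ v)) hconst
  exact ⟨_, ⟨⟨h, hh⟩, e, he, rfl⟩, j, hj⟩

/-- The partite construction: starting from disjoint edges, amalgamate along each part in turn. -/
theorem exists_edgeExtendable_two_mul {κ Φ : Type*} [Finite κ] [Nonempty κ] [Zero Φ] {n : ℕ}
    (ih : ∀ (B : Type u) [Finite B],
      ∃ (W : Type u) (_ : Finite W) (H : Set (B → W)), EdgeExtendable Φ n H ∧ VertexRamsey κ H)
    (A : Type u) [Finite A] :
    ∃ (V : Type u) (_ : Finite V) (E : Set (A → V)),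
      EdgeExtendable Φ (2 * n) E ∧ VertexRamsey κ E := by
  cases nonempty_fintype κ
  cases nonempty_fintype A
  let N := Fintype.card κ * Fintype.card A
  have stage (i : ℕ) (hi : i ≤ N) : ∃ (V : Type u) (_ : Finite V) (E : Set (A → V)) (p : V → ℕ),
      EdgeExtendable Φ (2 * n) E ∧ VertexExtendable Φ (2 * n) E p ∧ VertexRamseyFrom κ E p i ∧
        ∀ v, p v < N := by
    induction i with
    | zero =>
      exact ⟨(A ↪ Fin N) × A, inferInstance, _, _, edgeExtendable_range_mk Φ _ A _,
        vertexExtendable_range_mk Φ _ fun e => Fin.val_injective.comp e.injective,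
        vertexRamseyFrom_embeddings κ A, fun v => (v.1 v.2).isLt⟩
    | succ i ihi =>
      obtain ⟨V, _, E, p, hE, hEp, hEκ, hpN⟩ := ihi (Nat.le_of_succ_le hi)
      obtain ⟨W, _, H, hH, hHκ⟩ := ih {v // p v = i}
      refine ⟨_, inferInstance, amalgamEdges E H, amalgamPart, hE.amalgam hEp hH, hEp.amalgam hH,
        hEκ.amalgam hHκ, ?_⟩
      rintro (_ | w)
      exacts [hi, hpN w.2]
  obtain ⟨V, hV, E, p, hE, -, hEκ, hpN⟩ := stage N le_rfl
  exact ⟨V, hV, E, hE, hEκ.vertexRamsey hpN⟩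

theorem exists_edgeExtendable_vertexRamsey (κ Φ : Type*) [Finite κ] [Nonempty κ] [Zero Φ] (k : ℕ) :
    ∀ (A : Type u) [Finite A], ∃ (V : Type u) (_ : Finite V) (E : Set (A → V)),
      EdgeExtendable Φ (2 ^ k) E ∧ VertexRamsey κ E := by
  induction k with
  | zero =>
    intro A _
    obtain ⟨ι, _, hι⟩ := Combinatorics.Line.exists_mono_in_high_dimension A κ
    refine ⟨ι → A, inferInstance, _, edgeExtendable_one_combinatorialLines Φ A ι, fun c => ?_⟩
    obtain ⟨l, hl⟩ := hι c
    exact ⟨l, ⟨l, rfl⟩, hl⟩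
  | succ k ih =>
    rw [pow_succ']
    exact exists_edgeExtendable_two_mul ih

end Hypergraph

section DualSpace

open Metric

variable {𝕜 X Y A V : Type*} [RCLike 𝕜] [NormedAddCommGroup X] [NormedSpace 𝕜 X]
  [NormedAddCommGroup Y] [NormedSpace 𝕜 Y] {n : ℕ}

theorem exists_extension_along_isometry (η : X →ₗᵢ[𝕜] Y) (f : StrongDual 𝕜 X) :
    ∃ g : StrongDual 𝕜 Y, ‖g‖ = ‖f‖ ∧ g.comp η.toContinuousLinearMap = f := by
  obtain ⟨g, hgf, hg⟩ := exists_extension_norm_eq (LinearMap.range η.toLinearMap)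
    (f.comp (η.equivRange.symm : _ →L[𝕜] X))
  refine ⟨g, hg.trans (f.opNorm_comp_linearIsometryEquiv η.equivRange.symm), ?_⟩
  ext x
  exact (hgf (η.equivRange x)).trans (congrArg f (η.equivRange.symm_apply_apply x))

theorem norm_comp_isometry_le (g : StrongDual 𝕜 Y) (η : X →ₗᵢ[𝕜] Y) :
    ‖g.comp η.toContinuousLinearMap‖ ≤ ‖g‖ :=
  (g.opNorm_comp_le _).trans <|
    mul_le_of_le_one_right (norm_nonneg g) η.norm_toContinuousLinearMap_le

theorem exists_approx_extension_along_isometry (η : X →ₗᵢ[𝕜] Y) {f : StrongDual 𝕜 X} {r δ : ℝ}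
    (hr : 0 ≤ r) (hδ : 0 ≤ δ) (hf : ‖f‖ ≤ r + δ) :
    ∃ g : StrongDual 𝕜 Y, ‖g‖ ≤ r ∧ ‖g.comp η.toContinuousLinearMap - f‖ ≤ δ := by
  obtain ⟨f', hff', hf'⟩ := exists_dist_le_le hδ hr ((dist_zero_right f).trans_le hf)
  obtain ⟨g, hg, rfl⟩ := exists_extension_along_isometry η f'
  rw [dist_zero_right] at hf'
  rw [dist_comm, dist_eq_norm] at hff'
  exact ⟨g, hg.trans_le hf', hff'⟩

theorem norm_isometry_comp_sub_le {Z : Type*} [NormedAddCommGroup Z] [NormedSpace 𝕜 Z]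
    (γ : Y →ₗᵢ[𝕜] Z) {η η' : X →ₗᵢ[𝕜] Y} {ξ : X →ₗᵢ[𝕜] Z} {δ δ' : ℝ}
    (hη : ‖η.toContinuousLinearMap - η'.toContinuousLinearMap‖ ≤ δ)
    (hξ : ‖(γ.comp η').toContinuousLinearMap - ξ.toContinuousLinearMap‖ ≤ δ') :
    ‖(γ.comp η).toContinuousLinearMap - ξ.toContinuousLinearMap‖ ≤ δ + δ' := by
  refine (norm_sub_le_norm_sub_add_norm_sub _ (γ.comp η').toContinuousLinearMap _).trans
    (add_le_add ?_ hξ)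
  rw [← γ.norm_toContinuousLinearMap_comp, ContinuousLinearMap.comp_sub] at hη
  exact hη

/-- Functionals on copies of `X` inside copies of `Y`: a tuple is admissible if it is `1 / n`-close
to the restrictions of one contractive functional on `Y`, and the norm bound drops from `1` to `0`
in `n` steps of size `1 / n`, after which the truncated subtraction keeps it at `0`. -/
def dualSystem (η : A → X →ₗᵢ[𝕜] Y) (n : ℕ) : DecaySystem A (StrongDual 𝕜 X) n where
  level j := closedBall 0 ((n - j : ℕ) / n)
  admissible := {τ | ∃ g : StrongDual 𝕜 Y, ‖g‖ ≤ 1 ∧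
    ∀ a, ‖g.comp (η a).toContinuousLinearMap - τ a‖ ≤ 1 / n}
  antitone_level _ _ hjk := closedBall_subset_closedBall (by gcongr)
  zero_mem_level _ := mem_closedBall_self (by positivity)
  level_subset_zero := by simp
  zero_mem_admissible := ⟨0, by simp⟩
  exists_admissible j a x hx := by
    classical
    rw [mem_closedBall_zero_iff] at hx
    have hstep : ((n - j : ℕ) : ℝ) / n ≤ (n - (j + 1) : ℕ) / n + 1 / n := by
      rw [← add_div]
      gcongr
      exact_mod_cast (by omega : n - j ≤ n - (j + 1) + 1)
    obtain ⟨g, hg, hgx⟩ := exists_approx_extension_along_isometry (η a) (by positivity)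
      (by positivity) (hx.trans hstep)
    refine ⟨Function.update (fun b => g.comp (η b).toContinuousLinearMap) a x,
      ⟨g, hg.trans (div_le_one_of_le₀ (by simp) (by simp)), fun b => ?_⟩, by simp, fun b hb => ?_⟩
    · by_cases hb : b = a
      · subst hb
        simpa using hgx
      · simp [hb]
    · simpa [hb] using (norm_comp_isometry_le g (η b)).trans hg

/-- The families consisting of one contractive functional on each vertex copy of `X` and one on each
edge copy of `Y` which agree up to `δ`: the dual unit ball of the approximate amalgam of these
copies. -/
def compatibleDuals (η : A → X →ₗᵢ[𝕜] Y) (E : Set (A → V)) (δ : ℝ) :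
    Set ((V → StrongDual 𝕜 X) × (E → StrongDual 𝕜 Y)) :=
  {t | (∀ v, ‖t.1 v‖ ≤ 1) ∧ (∀ e, ‖t.2 e‖ ≤ 1) ∧
    ∀ (e : E) a, ‖(t.2 e).comp (η a).toContinuousLinearMap - t.1 (e.1 a)‖ ≤ δ}

variable {η : A → X →ₗᵢ[𝕜] Y} {E : Set (A → V)}

theorem mem_dualSystem_level_zero (η : A → X →ₗᵢ[𝕜] Y) (hn : 0 < n) {f : StrongDual 𝕜 X} :
    f ∈ (dualSystem η n).level 0 ↔ ‖f‖ ≤ 1 := by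
  simp [dualSystem, hn.ne']

theorem norm_le_one_of_mem_dualSystem_level {j : ℕ} {f : StrongDual 𝕜 X}
    (hf : f ∈ (dualSystem η n).level j) : ‖f‖ ≤ 1 :=
  (mem_closedBall_zero_iff.1 hf).trans (div_le_one_of_le₀ (by simp) (by simp))

theorem range_compatibleDuals_fst (hE : EdgeExtendable (StrongDual 𝕜 X) n E) (hn : 0 < n) (v : V) :
    Set.range (fun t : compatibleDuals η E (1 / n) => t.1.1 v) = closedBall 0 1 := by
  refine Set.Subset.antisymm ?_ fun f hf => ?_
  · rintro _ ⟨t, rfl⟩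
    exact mem_closedBall_zero_iff.2 (t.2.1 v)
  · obtain ⟨l, hladm, hlv, hl₁⟩ := hE.exists_labelling_of_vertex (dualSystem η n) v
      ((mem_dualSystem_level_zero η hn).2 (mem_closedBall_zero_iff.1 hf))
    choose g hg hgl using fun e : E => hladm e e.2
    refine ⟨⟨(l, g), fun w => ?_, hg, hgl⟩, hlv⟩
    by_cases hw : w = v
    · simpa [hw, hlv] using hf
    · exact norm_le_one_of_mem_dualSystem_level (hl₁ w hw)

theorem range_compatibleDuals_snd (hE : EdgeExtendable (StrongDual 𝕜 X) n E) (hn : 0 < n) (e₀ : E) :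
    Set.range (fun t : compatibleDuals η E (1 / n) => t.1.2 e₀) = closedBall 0 1 := by
  refine Set.Subset.antisymm ?_ fun g₀ hg₀ => ?_
  · rintro _ ⟨t, rfl⟩
    exact mem_closedBall_zero_iff.2 (t.2.2.1 e₀)
  · rw [mem_closedBall_zero_iff] at hg₀
    have hrestr (a : A) : ‖g₀.comp (η a).toContinuousLinearMap‖ ≤ 1 :=
      (norm_comp_isometry_le g₀ (η a)).trans hg₀
    obtain ⟨l, hle₀, hladm, hl₁⟩ := hE (dualSystem η n) e₀ e₀.2 _ fun a =>
      (mem_dualSystem_level_zero η hn).2 (hrestr a)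
    have hedge (e : E) : ∃ g : StrongDual 𝕜 Y, (e = e₀ → g = g₀) ∧ ‖g‖ ≤ 1 ∧
        ∀ a, ‖g.comp (η a).toContinuousLinearMap - l (e.1 a)‖ ≤ 1 / n := by
      by_cases he : e = e₀
      · subst he
        refine ⟨g₀, fun _ => rfl, hg₀, fun a => ?_⟩
        simp [show l (e.1 a) = _ from congrFun hle₀ a]
      · obtain ⟨g, hg, hgl⟩ := hladm e e.2 fun h => he (Subtype.ext h)
        exact ⟨g, fun h => absurd h he, hg, hgl⟩
    choose g hge₀ hg hgl using hedge
    refine ⟨⟨(l, g), fun v => ?_, hg, hgl⟩, hge₀ e₀ rfl⟩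
    by_cases hv : v ∈ Set.range e₀.1
    · obtain ⟨a, rfl⟩ := hv
      exact (congrArg norm (congrFun hle₀ a)).trans_le (hrestr a)
    · exact norm_le_one_of_mem_dualSystem_level (hl₁ v hv)

open BoundedContinuousFunction

/-- The evaluation embedding of `X` into the bounded functions on a space parametrizing its dual
unit ball. -/
noncomputable def dualEvaluation {T : Type*} [TopologicalSpace T] (φ : T → StrongDual 𝕜 X)
    (hφ : Continuous φ) (hball : Set.range φ = closedBall 0 1) : X →ₗᵢ[𝕜] T →ᵇ 𝕜 :=
  have hle (t : T) (x : X) : ‖φ t x‖ ≤ ‖x‖ := by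
    have ht : φ t ∈ closedBall 0 1 := hball ▸ Set.mem_range_self t
    exact (φ t).le_of_opNorm_le_of_le (mem_closedBall_zero_iff.1 ht) le_rfl |>.trans_eq (one_mul _)
  let ev (x : X) : T →ᵇ 𝕜 :=
    ofNormedAddCommGroup (fun t => φ t x) (hφ.clm_apply continuous_const) ‖x‖ fun t => hle t x
  { toFun := ev
    map_add' x y := by ext t; exact map_add (φ t) x y
    map_smul' c x := by ext t; exact map_smul (φ t) c x
    norm_map' x := by
      refine le_antisymm ((norm_le (norm_nonneg x)).2 fun t => hle t x) ?_
      obtain ⟨f, hf, hfx⟩ := exists_dual_vector'' 𝕜 x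
      obtain ⟨t, rfl⟩ : f ∈ Set.range φ := hball ▸ mem_closedBall_zero_iff.2 hf
      calc
        ‖x‖ = ‖ev x t‖ := by simp [ev, hfx]
        _ ≤ ‖ev x‖ := norm_coe_le_norm (ev x) t }

/-- The amalgam is realized inside the functions on what is to be its dual unit ball. -/
theorem exists_approx_amalgam [Finite A] [Finite V] [FiniteDimensional 𝕜 X] [FiniteDimensional 𝕜 Y]
    (hE : EdgeExtendable (StrongDual 𝕜 X) n E) (hn : 0 < n) {sX : StrongDual 𝕜 X}
    {sY : StrongDual 𝕜 Y} (hsX : ‖sX‖ ≤ 1) (hsY : ‖sY‖ ≤ 1)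
    (hη : ∀ a, sY.comp (η a).toContinuousLinearMap = sX) :
    ∃ (Z : Submodule 𝕜 (compatibleDuals η E (1 / n) →ᵇ 𝕜)) (_ : FiniteDimensional 𝕜 Z)
      (sZ : StrongDual 𝕜 Z) (ι : V → X →ₗᵢ[𝕜] Z) (θ : E → Y →ₗᵢ[𝕜] Z), ‖sZ‖ ≤ 1 ∧
      (∀ v, sZ.comp (ι v).toContinuousLinearMap = sX) ∧
      (∀ e, sZ.comp (θ e).toContinuousLinearMap = sY) ∧
      ∀ e a, ‖((θ e).comp (η a)).toContinuousLinearMap - (ι (e.1 a)).toContinuousLinearMap‖ ≤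
        1 / n := by
  let ι (v : V) : X →ₗᵢ[𝕜] compatibleDuals η E (1 / n) →ᵇ 𝕜 :=
    dualEvaluation _ ((continuous_apply v).comp (continuous_fst.comp continuous_subtype_val))
       (range_compatibleDuals_fst hE hn v)
  let θ (e : E) : Y →ₗᵢ[𝕜] compatibleDuals η E (1 / n) →ᵇ 𝕜 :=
    dualEvaluation _ ((continuous_apply e).comp (continuous_snd.comp continuous_subtype_val))
       (range_compatibleDuals_snd hE hn e)
  let Z := (⨆ v, LinearMap.range (ι v).toLinearMap) ⊔ ⨆ e, LinearMap.range (θ e).toLinearMap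
  have hιZ (v : V) (x : X) : ι v x ∈ Z :=
    Submodule.mem_sup_left (Submodule.mem_iSup_of_mem v ⟨x, rfl⟩)
  have hθZ (e : E) (y : Y) : θ e y ∈ Z :=
    Submodule.mem_sup_right (Submodule.mem_iSup_of_mem e ⟨y, rfl⟩)
  let t₀ : compatibleDuals η E (1 / n) :=
    ⟨(fun _ => sX, fun _ => sY), fun _ => hsX, fun _ => hsY, fun e a => by simp [hη a]⟩
  refine ⟨Z, inferInstance, (evalCLM 𝕜 t₀).comp Z.subtypeL,
    fun v => ⟨(ι v).toLinearMap.codRestrict Z (hιZ v), (ι v).norm_map⟩,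
    fun e => ⟨(θ e).toLinearMap.codRestrict Z (hθZ e), (θ e).norm_map⟩, ?_, fun v => rfl,
    fun e => rfl, fun e a => ?_⟩
  · refine ContinuousLinearMap.opNorm_le_bound _ zero_le_one fun z => ?_
    rw [one_mul]
    exact norm_coe_le_norm z.1 t₀
  · refine ContinuousLinearMap.opNorm_le_bound _ (by positivity) fun x => ?_
    refine (norm_le (by positivity)).2 fun t => ?_
    exact ContinuousLinearMap.le_of_opNorm_le _ (t.2.2.2 e a) x

end DualSpace

section Ramsey

variable {𝕜 : Type w} {X : Type u} {Y : Type v} [RCLike 𝕜] [NormedAddCommGroup X] [NormedSpace 𝕜 X]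
  [FiniteDimensional 𝕜 X] [NormedAddCommGroup Y] [NormedSpace 𝕜 Y] [FiniteDimensional 𝕜 Y]

theorem exists_ramsey_of_finite_family {A : Type a} {κ : Type*} [Finite A] [Finite κ] [Nonempty κ]
    (η : A → X →ₗᵢ[𝕜] Y) {sX : StrongDual 𝕜 X} {sY : StrongDual 𝕜 Y} (hsX : ‖sX‖ ≤ 1)
    (hsY : ‖sY‖ ≤ 1) (hη : ∀ a, sY.comp (η a).toContinuousLinearMap = sX) {δ : ℝ} (hδ : 0 < δ) :
    ∃ (Z : Type (max a u v w)) (_ : NormedAddCommGroup Z) (_ : NormedSpace 𝕜 Z)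
      (_ : FiniteDimensional 𝕜 Z) (sZ : StrongDual 𝕜 Z), ‖sZ‖ ≤ 1 ∧
      ∀ c : {φ : X →ₗᵢ[𝕜] Z // sZ.comp φ.toContinuousLinearMap = sX} → κ,
        ∃ γ : Y →ₗᵢ[𝕜] Z, sZ.comp γ.toContinuousLinearMap = sY ∧ ∃ j, ∀ a, ∃ ξ, c ξ = j ∧
          ‖(γ.comp (η a)).toContinuousLinearMap - ξ.1.toContinuousLinearMap‖ ≤ δ := by
  obtain ⟨k, hk⟩ := exists_pow_lt_of_lt_one hδ (one_half_lt_one (α := ℝ))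
  have hkδ : 1 / ((2 ^ k : ℕ) : ℝ) ≤ δ := by
    rw [Nat.cast_pow, Nat.cast_ofNat, ← one_div_pow]
    exact hk.le
  obtain ⟨V, _, E, hE, hEκ⟩ := exists_edgeExtendable_vertexRamsey κ (StrongDual 𝕜 X) k A
  obtain ⟨Z, _, sZ, ι, θ, hsZ, hι, hθ, hιθ⟩ :=
    exists_approx_amalgam hE (Nat.two_pow_pos k) hsX hsY hη
  refine ⟨Z, inferInstance, inferInstance, inferInstance, sZ, hsZ, fun c => ?_⟩
  obtain ⟨e, he, j, hj⟩ := hEκ fun v => c ⟨ι v, hι v⟩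
  exact ⟨θ ⟨e, he⟩, hθ _, j, fun a => ⟨⟨ι (e a), hι _⟩, hj a, (hιθ ⟨e, he⟩ a).trans hkδ⟩⟩

theorem exists_finite_isometry_net (S : Set (X →ₗᵢ[𝕜] Y)) {δ : ℝ} (hδ : 0 < δ) :
    ∃ N ⊆ S, N.Finite ∧ ∀ η ∈ S, ∃ η' ∈ N,
      ‖η.toContinuousLinearMap - η'.toContinuousLinearMap‖ ≤ δ := by
  have : ProperSpace (X →L[𝕜] Y) := FiniteDimensional.proper_rclike 𝕜 _
  have hS : TotallyBounded (LinearIsometry.toContinuousLinearMap '' S) := by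
    refine (isCompact_closedBall (0 : X →L[𝕜] Y) 1).totallyBounded.subset ?_
    rintro _ ⟨η, -, rfl⟩
    exact mem_closedBall_zero_iff.2 η.norm_toContinuousLinearMap_le
  obtain ⟨N, hNS, hN, hcover⟩ :=
    Set.exists_subset_image_finite_and.1 (Metric.finite_approx_of_totallyBounded hS δ hδ)
  refine ⟨N, hNS, hN, fun η hη => ?_⟩
  obtain ⟨_, ⟨η', hη', rfl⟩, hdist⟩ := Set.mem_iUnion₂.1 (hcover ⟨η, hη, rfl⟩)
  exact ⟨η', hη', (dist_eq_norm _ _).symm.trans_le hdist.le⟩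

theorem arp_normed_spaces_with_functional_general {κ : Type*} [Finite κ]
    {sX : X →L[𝕜] 𝕜} (hsX : ‖sX‖ ≤ 1) {sY : Y →L[𝕜] 𝕜} (hsY : ‖sY‖ ≤ 1) {ε : ℝ} (hε : 0 < ε) :
    ∃ (Z : Type (max u v w)) (_ : NormedAddCommGroup Z) (_ : NormedSpace 𝕜 Z)
      (_ : FiniteDimensional 𝕜 Z) (sZ : Z →L[𝕜] 𝕜), ‖sZ‖ ≤ 1 ∧
      ∀ c : {φ : X →L[𝕜] Z // (∀ x, ‖φ x‖ = ‖x‖) ∧ sZ.comp φ = sX} → κ,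
        ∃ (γ : Y →L[𝕜] Z) (_ : ∀ y, ‖γ y‖ = ‖y‖) (_ : sZ.comp γ = sY) (j : κ),
          ∀ η : X →L[𝕜] Y, (∀ x, ‖η x‖ = ‖x‖) → sY.comp η = sX →
            ∃ (ξ : X →L[𝕜] Z) (hξ : (∀ x, ‖ξ x‖ = ‖x‖) ∧ sZ.comp ξ = sX),
              c ⟨ξ, hξ⟩ = j ∧ ‖γ.comp η - ξ‖ ≤ ε := by
  cases isEmpty_or_nonempty κ
  · let i : ULift.{max v w} X ≃ₗᵢ[𝕜] X := LinearIsometryEquiv.ulift 𝕜 X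
    let sZ : StrongDual 𝕜 (ULift.{max v w} X) := sX.comp i.toLinearIsometry.toContinuousLinearMap
    have hsZ : ‖sZ‖ ≤ 1 := (norm_comp_isometry_le sX i.toLinearIsometry).trans hsX
    refine ⟨_, inferInstance, inferInstance, inferInstance, sZ, hsZ, fun c => ?_⟩
    exact isEmptyElim
      (c ⟨i.symm.toLinearIsometry.toContinuousLinearMap, i.symm.norm_map, by ext; simp [sZ]⟩)
  obtain ⟨N, hNS, hN, hnet⟩ := exists_finite_isometry_net
    {η : X →ₗᵢ[𝕜] Y | sY.comp η.toContinuousLinearMap = sX} (half_pos hε)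
  have := hN.to_subtype
  obtain ⟨Z, _, _, _, sZ, hsZ, hZ⟩ := exists_ramsey_of_finite_family (κ := κ)
    (fun η : N => η.1) hsX hsY (fun η => hNS η.2) (half_pos hε)
  refine ⟨Z, inferInstance, inferInstance, inferInstance, sZ, hsZ, fun c => ?_⟩
  obtain ⟨γ, hγ, j, hj⟩ := hZ fun φ => c ⟨φ.1.toContinuousLinearMap, φ.1.norm_map, φ.2⟩
  refine ⟨γ.toContinuousLinearMap, γ.norm_map, hγ, j, fun η hη hηs => ?_⟩
  obtain ⟨η', hη', hηη'⟩ := hnet ⟨η.toLinearMap, hη⟩ hηs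
  obtain ⟨ξ, hξj, hξ⟩ := hj ⟨η', hη'⟩
  exact ⟨ξ.1.toContinuousLinearMap, ⟨ξ.1.norm_map, ξ.2⟩, hξj,
    (norm_isometry_comp_sub_le γ hηη' hξ).trans_eq (add_halves ε)⟩

end Ramsey

/-- Approximate Ramsey property of the class of finite-dimensional complex normed spaces
equipped with a distinguished contractive functional. -/
theorem arp_normed_spaces_with_functional
    (X Y : Type u) [NormedAddCommGroup X] [NormedSpace ℂ X] [FiniteDimensional ℂ X]
    [NormedAddCommGroup Y] [NormedSpace ℂ Y] [FiniteDimensional ℂ Y]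
    (sX : X →L[ℂ] ℂ) (hsX : ‖sX‖ ≤ 1) (sY : Y →L[ℂ] ℂ) (hsY : ‖sY‖ ≤ 1)
    (r : ℕ) (ε : ℝ) (hε : 0 < ε) :
    ∃ (Z : Type u) (_ : NormedAddCommGroup Z) (_ : NormedSpace ℂ Z)
      (_ : FiniteDimensional ℂ Z) (sZ : Z →L[ℂ] ℂ), ‖sZ‖ ≤ 1 ∧
      ∀ c : {φ : X →L[ℂ] Z // (∀ x, ‖φ x‖ = ‖x‖) ∧ sZ.comp φ = sX} → Fin r,
        ∃ (γ : Y →L[ℂ] Z) (_ : ∀ y, ‖γ y‖ = ‖y‖) (_ : sZ.comp γ = sY) (j : Fin r),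
          ∀ η : X →L[ℂ] Y, (∀ x, ‖η x‖ = ‖x‖) → sY.comp η = sX →
            ∃ (ξ : X →L[ℂ] Z) (hξ : (∀ x, ‖ξ x‖ = ‖x‖) ∧ sZ.comp ξ = sX),
              c ⟨ξ, hξ⟩ = j ∧ ‖γ.comp η - ξ‖ ≤ ε := by
  exact arp_normed_spaces_with_functional_general hsX hsY hε
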